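/- Let n ≥ 1 and let F be an n×n real matrix that is Hurwitz (every eigenvalue of F, viewed as a complex matrix, has negative real part). Let F̃ : ℝ → (n×n real matrices) and F̂ : ℝ → ℝⁿ be continuous, and suppose there exist constants c₀ > 0 and λ₀ > 0 such that ‖F̃(t)‖ ≤ c₀·exp(−λ₀ t) and ‖F̂(t)‖ ≤ c₀·exp(−λ₀ t) for all t ≥ 0. If x : ℝ → ℝⁿ is differentiable and satisfies ẋ(t) = F·x(t) + F̃(t)·x(t) + F̂(t) for all t ≥ 0, then x converges to zero exponentially: there exist c > 0 and λ > 0 such that ‖x(t)‖ ≤ c·exp(−λ t) for all t ≥ 0. (The key lemma used in the proof of Theorem 1: a Hurwitz linear system perturbed by exponentially vanishing terms remains exponentially stable.) -/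

import Mathlib

attribute [local instance] Matrix.normedAddCommGroup Matrix.normedSpace

open Filter

/-!
Since the spectrum of `F` lies in the open left half-plane, the explicit Euler step `1 + h F` has
spectral radius less than one for small `h > 0`, so by Gelfand's formula it is a strict contraction
for an equivalent norm. In that norm `‖F v + h⁻¹ v‖ ≤ h⁻¹ r ‖v‖` for some `r < 1`, that is, the
logarithmic norm of `F` is negative, and the solution can be compared directly with a scalar
barrier `M exp (-lam t - K exp (-μ t))`, whose factor `exp (-K exp (-μ t))` absorbs the
perturbation `Ftil`.
-/

section Comparison

variable {E : Type*} [NormedAddCommGroup E] [NormedSpace ℝ E] {z z' : ℝ → E}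

theorem hasDerivAt_exp_const_mul (k t : ℝ) :
    HasDerivAt (fun t => Real.exp (k * t)) (k * Real.exp (k * t)) t := by
  simpa [mul_comm] using ((hasDerivAt_id t).const_mul k).exp

theorem norm_le_of_norm_deriv_add_smul_lt_deriv_boundary {W W' : ℝ → ℝ} {a : ℝ}
    (hz : ∀ t ≥ (0 : ℝ), HasDerivAt z (z' t) t) (hW : ∀ t, HasDerivAt W (W' t) t)
    (h0 : ‖z 0‖ ≤ W 0)
    (bound : ∀ t ≥ (0 : ℝ), ‖z t‖ = W t → ‖z' t + a • z t‖ < W' t + a * W t) :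
    ∀ t ≥ (0 : ℝ), ‖z t‖ ≤ W t := by
  intro T hT
  have norm_exp_smul (t : ℝ) (v : E) : ‖Real.exp (a * t) • v‖ = Real.exp (a * t) * ‖v‖ := by
    rw [norm_smul, Real.norm_of_nonneg (Real.exp_pos _).le]
  have hf : ∀ t ≥ (0 : ℝ), HasDerivAt (fun t => Real.exp (a * t) • z t)
      (Real.exp (a * t) • (z' t + a • z t)) t := fun t ht => by
    refine ((hasDerivAt_exp_const_mul a t).smul (hz t ht)).congr_deriv ?_
    rw [smul_add, smul_smul, mul_comm a (Real.exp _)]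
  have hB (t : ℝ) : HasDerivAt (fun t => Real.exp (a * t) * W t)
      (Real.exp (a * t) * (W' t + a * W t)) t :=
    ((hasDerivAt_exp_const_mul a t).mul (hW t)).congr_deriv (by ring)
  have weighted : ‖Real.exp (a * T) • z T‖ ≤ Real.exp (a * T) * W T := by
    refine image_norm_le_of_norm_deriv_right_lt_deriv_boundary
      (fun t ht => (hf t ht.1).continuousAt.continuousWithinAt)
      (fun t ht => (hf t ht.1).hasDerivWithinAt) (by simpa using h0) hB
      (fun t ht heq => ?_) (Set.right_mem_Icc.2 hT)
    rw [norm_exp_smul] at heq ⊢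
    have touch : ‖z t‖ = W t := mul_left_cancel₀ (Real.exp_pos _).ne' heq
    exact mul_lt_mul_of_pos_left (bound t ht.1 touch) (Real.exp_pos _)
  rw [norm_exp_smul] at weighted
  exact le_of_mul_le_mul_left weighted (Real.exp_pos _)

/-- The barrier to which solutions of perturbed systems are compared: a decaying exponential of
rate `lam` times a factor that increases from `exp (-K)` to `1`, so as to outgrow a perturbation
of size `K * μ * exp (-μ * t)`. -/
noncomputable def decayBarrier (M lam K μ t : ℝ) : ℝ :=
  M * Real.exp (-lam * t - K * Real.exp (-μ * t))

theorem hasDerivAt_decayBarrier (M lam K μ t : ℝ) :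
    HasDerivAt (decayBarrier M lam K μ)
      ((-lam + K * μ * Real.exp (-μ * t)) * decayBarrier M lam K μ t) t := by
  have exponent : HasDerivAt (fun t => -lam * t - K * Real.exp (-μ * t))
      (-lam + K * μ * Real.exp (-μ * t)) t :=
    (((hasDerivAt_id t).const_mul (-lam)).sub
      ((hasDerivAt_exp_const_mul (-μ) t).const_mul K)).congr_deriv (by ring)
  exact (exponent.exp.const_mul M).congr_deriv (by rw [decayBarrier]; ring)

theorem decayBarrier_zero (M lam K μ : ℝ) :
    decayBarrier M lam K μ 0 = M * Real.exp (-K) := by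
  simp [decayBarrier]

theorem decayBarrier_le {M K : ℝ} (hM : 0 ≤ M) (hK : 0 ≤ K) (lam μ t : ℝ) :
    decayBarrier M lam K μ t ≤ M * Real.exp (-lam * t) := by
  unfold decayBarrier
  gcongr
  exact sub_le_self _ (by positivity)

theorem le_decayBarrier {M lam K μ t : ℝ} (hM : 0 ≤ M) (hK : 0 ≤ K) (hμ : 0 ≤ μ)
    (hlam : lam ≤ μ) (ht : 0 ≤ t) :
    M * Real.exp (-K) * Real.exp (-μ * t) ≤ decayBarrier M lam K μ t := by
  have hexp : K * Real.exp (-μ * t) ≤ K :=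
    mul_le_of_le_one_right hK (Real.exp_le_one_iff.2 (by nlinarith))
  have hrate : lam * t ≤ μ * t := mul_le_mul_of_nonneg_right hlam ht
  rw [decayBarrier, mul_assoc, ← Real.exp_add]
  gcongr
  linarith

theorem exists_norm_le_exp_of_norm_deriv_add_smul_le {a b P μ : ℝ} (hab : b < a) (hP : 0 ≤ P)
    (hμ : 0 < μ) (hz : ∀ t ≥ (0 : ℝ), HasDerivAt z (z' t) t)
    (bound : ∀ t ≥ (0 : ℝ),
      ‖z' t + a • z t‖ ≤ b * ‖z t‖ + P * Real.exp (-μ * t) * (‖z t‖ + 1)) :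
    ∃ c > 0, ∃ lam > 0, ∀ t ≥ (0 : ℝ), ‖z t‖ ≤ c * Real.exp (-lam * t) := by
  obtain ⟨lam, hlam, hlamlt⟩ := exists_between (lt_min hμ (sub_pos.2 hab))
  obtain ⟨hlamμ, hlamab⟩ := lt_min_iff.1 hlamlt
  have hδ : 0 < a - b - lam := sub_pos.2 hlamab
  obtain ⟨m, hm⟩ := exists_gt (max ‖z 0‖ (P / (a - b - lam)))
  obtain ⟨hzm, hPm⟩ := max_lt_iff.1 hm
  have hm0 : 0 < m := (norm_nonneg _).trans_lt hzm
  set K := P / μ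
  set M := m * Real.exp K
  have hKμ : K * μ = P := div_mul_cancel₀ P hμ.ne'
  have hK0 : 0 ≤ K := div_nonneg hP hμ.le
  have hM0 : 0 < M := by positivity
  have hMK : M * Real.exp (-K) = m := by
    rw [mul_assoc, ← Real.exp_add, add_neg_cancel, Real.exp_zero, mul_one]
  have below : ∀ t ≥ (0 : ℝ), ‖z t‖ ≤ decayBarrier M lam K μ t := by
    refine norm_le_of_norm_deriv_add_smul_lt_deriv_boundary (a := a) hz
      (hasDerivAt_decayBarrier M lam K μ) (by rw [decayBarrier_zero, hMK]; exact hzm.le)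
      fun t ht touch => ?_
    set W := decayBarrier M lam K μ t
    have absorb : P * Real.exp (-μ * t) < (a - b - lam) * W :=
      calc P * Real.exp (-μ * t) < (a - b - lam) * m * Real.exp (-μ * t) := by
            gcongr
            exact (div_lt_iff₀' hδ).1 hPm
        _ ≤ (a - b - lam) * W := by
            rw [mul_assoc, ← hMK]
            gcongr
            exact le_decayBarrier hM0.le hK0 hμ.le hlamμ.le ht
    calc ‖z' t + a • z t‖ ≤ b * W + P * Real.exp (-μ * t) * (W + 1) := touch ▸ bound t ht
      _ < (-lam + K * μ * Real.exp (-μ * t)) * W + a * W := by rw [hKμ]; linarith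
  exact ⟨M, hM0, lam, hlam, fun t ht => (below t ht).trans (decayBarrier_le hM0.le hK0 lam μ t)⟩

end Comparison

section AdaptedNorm

variable {𝕜 E : Type*} [NontriviallyNormedField 𝕜] [NormedAddCommGroup E] [NormedSpace 𝕜 E]

/-- The first `m` terms of the orbit of a vector under `B`, the `k`-th one divided by `c ^ k`.
It embeds `E` in a product, and pulling back the norm along it gives the norm on `E` adapted to
`B`, for which `B` has norm at most `‖c‖` once `‖B ^ m‖ ≤ ‖c‖ ^ m`. -/
noncomputable def weightedOrbit (B : E →L[𝕜] E) (c : 𝕜) (m : ℕ) : E →L[𝕜] (Fin m → E) :=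
  ContinuousLinearMap.pi fun k => c⁻¹ ^ (k : ℕ) • B ^ (k : ℕ)

theorem weightedOrbit_apply (B : E →L[𝕜] E) (c : 𝕜) (m : ℕ) (v : E) (k : Fin m) :
    weightedOrbit B c m v k = c⁻¹ ^ (k : ℕ) • (B ^ (k : ℕ)) v :=
  rfl

theorem norm_le_norm_weightedOrbit (B : E →L[𝕜] E) (c : 𝕜) (m : ℕ) [NeZero m] (v : E) :
    ‖v‖ ≤ ‖weightedOrbit B c m v‖ := by
  simpa [weightedOrbit_apply] using norm_le_pi_norm (weightedOrbit B c m v) 0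

theorem norm_weightedOrbit_map_le {B : E →L[𝕜] E} {c : 𝕜} {m : ℕ} [NeZero m] (hc : c ≠ 0)
    (hB : ‖B ^ m‖ ≤ ‖c‖ ^ m) (v : E) :
    ‖weightedOrbit B c m (B v)‖ ≤ ‖c‖ * ‖weightedOrbit B c m v‖ := by
  refine (pi_norm_le_iff_of_nonneg (by positivity)).2 fun k => ?_
  have shift : weightedOrbit B c m (B v) k =
      c • c⁻¹ ^ ((k : ℕ) + 1) • (B ^ ((k : ℕ) + 1)) v := by
    rw [weightedOrbit_apply, smul_smul, pow_succ', mul_inv_cancel_left₀ hc, pow_succ B]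
    rfl
  rw [shift, norm_smul]
  gcongr
  rcases (Nat.succ_le_of_lt k.2).lt_or_eq with hk | hk
  · exact norm_le_pi_norm (weightedOrbit B c m v) ⟨k + 1, hk⟩
  · rw [← Nat.succ_eq_add_one, hk, norm_smul, norm_pow, norm_inv]
    calc ‖c‖⁻¹ ^ m * ‖(B ^ m) v‖
        ≤ ‖c‖⁻¹ ^ m * (‖c‖ ^ m * ‖v‖) := by
          gcongr
          exact (B ^ m).le_of_opNorm_le hB v
      _ = ‖v‖ := by
          rw [← mul_assoc, ← mul_pow, inv_mul_cancel₀ (norm_ne_zero_iff.2 hc), one_pow, one_mul]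
      _ ≤ ‖weightedOrbit B c m v‖ := norm_le_norm_weightedOrbit B c m v

end AdaptedNorm

section Spectrum

theorem exists_norm_one_add_mul_lt_one_of_isCompact {s : Set ℂ} (hs : IsCompact s)
    (hre : ∀ μ ∈ s, μ.re < 0) : ∃ h : ℝ, 0 < h ∧ ∀ μ ∈ s, ‖1 + h * μ‖ < 1 := by
  have hpos : ∀ μ ∈ s, 0 < ‖μ‖ ^ 2 := fun μ hμ => by
    have : μ ≠ 0 := fun h0 => (hre μ hμ).ne (by simp [h0])
    positivity
  obtain ⟨h, hh, hle⟩ := hs.exists_forall_le' (f := fun μ => -μ.re / ‖μ‖ ^ 2)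
    (Complex.continuous_re.neg.continuousOn.div (by fun_prop) fun μ hμ => (hpos μ hμ).ne')
    fun μ hμ => div_pos (neg_pos.2 (hre μ hμ)) (hpos μ hμ)
  refine ⟨h, hh, fun μ hμ => ?_⟩
  have hstep : h * ‖μ‖ ^ 2 ≤ -μ.re := (le_div_iff₀ (hpos μ hμ)).1 (hle μ hμ)
  have expand : ‖1 + h * μ‖ ^ 2 = 1 + h * (2 * μ.re + h * ‖μ‖ ^ 2) := by
    simp only [Complex.sq_norm, Complex.normSq_apply, Complex.add_re, Complex.one_re,
      Complex.re_ofReal_mul, Complex.add_im, Complex.one_im, Complex.im_ofReal_mul]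
    ring
  rw [← sq_lt_one_iff₀ (norm_nonneg _), expand]
  have := mul_neg_of_pos_of_neg hh (show 2 * μ.re + h * ‖μ‖ ^ 2 < 0 by linarith [hre μ hμ])
  linarith

variable {A : Type*} [NormedRing A] [NormedAlgebra ℂ A] [CompleteSpace A]

theorem exists_spectralRadius_one_add_smul_lt_one {a : A} (ha : ∀ μ ∈ spectrum ℂ a, μ.re < 0) :
    ∃ h : ℝ, 0 < h ∧ spectralRadius ℂ (1 + (h : ℂ) • a) < 1 := by
  obtain ⟨h, hh, hlt⟩ := exists_norm_one_add_mul_lt_one_of_isCompact (spectrum.isCompact a) ha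
  refine ⟨h, hh, ?_⟩
  cases subsingleton_or_nontrivial A
  · simp
  have euler : 1 + (h : ℂ) • a =
      Polynomial.aeval a (1 + Polynomial.C (h : ℂ) * Polynomial.X) := by
    simp [Algebra.smul_def]
  refine spectrum.spectralRadius_lt_of_forall_lt (r := 1) _ fun ν hν => ?_
  rw [euler, spectrum.map_polynomial_aeval] at hν
  obtain ⟨μ, hμ, rfl⟩ := hν
  simpa [← NNReal.coe_lt_coe] using hlt μ hμ

theorem eventually_norm_pow_le_of_spectralRadius_lt {a : A} {r : NNReal}
    (ha : spectralRadius ℂ a < r) : ∀ᶠ n : ℕ in atTop, ‖a ^ n‖ ≤ (r : ℝ) ^ n := by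
  filter_upwards [(spectrum.pow_nnnorm_pow_one_div_tendsto_nhds_spectralRadius
    a).eventually_lt_const ha, eventually_gt_atTop 0] with n hn hn0
  have hpow := ENNReal.rpow_le_rpow hn.le (z := (n : ℝ)) (by positivity)
  rw [← ENNReal.rpow_mul, one_div, inv_mul_cancel₀ (by positivity), ENNReal.rpow_one,
    ENNReal.rpow_natCast] at hpow
  exact_mod_cast hpow

end Spectrum

section Operator

variable {E : Type*} [NormedAddCommGroup E] [NormedSpace ℂ E] [CompleteSpace E]

theorem exists_contracting_embedding_of_spectralRadius_lt_one {B : E →L[ℂ] E}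
    (hB : spectralRadius ℂ B < 1) :
    ∃ (m : ℕ) (L : E →L[ℂ] (Fin m → E)) (r : ℝ), r < 1 ∧
      (∀ v, ‖v‖ ≤ ‖L v‖) ∧ ∀ v, ‖L (B v)‖ ≤ r * ‖L v‖ := by
  obtain ⟨r, hBr, hr1⟩ := ENNReal.lt_iff_exists_nnreal_btwn.1 hB
  have hr0 : r ≠ 0 := by
    rintro rfl
    simp at hBr
  obtain ⟨m, hpow, hm⟩ :=
    ((eventually_norm_pow_le_of_spectralRadius_lt hBr).and (eventually_gt_atTop 0)).exists
  have : NeZero m := ⟨hm.ne'⟩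
  have hnorm : ‖((r : ℝ) : ℂ)‖ = r := by simp
  refine ⟨m, weightedOrbit B (r : ℝ) m, r, by exact_mod_cast hr1,
    norm_le_norm_weightedOrbit B _ m, fun v => ?_⟩
  simpa only [hnorm] using
    norm_weightedOrbit_map_le (c := ((r : ℝ) : ℂ)) (by simpa using hr0) (by rwa [hnorm]) v

theorem exists_dissipative_embedding_of_spectrum_re_neg {A : E →L[ℂ] E}
    (hA : ∀ μ ∈ spectrum ℂ A, μ.re < 0) :
    ∃ (m : ℕ) (L : E →L[ℂ] (Fin m → E)) (a b : ℝ), b < a ∧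
      (∀ v, ‖v‖ ≤ ‖L v‖) ∧ ∀ v, ‖L (A v) + a • L v‖ ≤ b * ‖L v‖ := by
  obtain ⟨h, hh, hrad⟩ := exists_spectralRadius_one_add_smul_lt_one hA
  obtain ⟨m, L, r, hr, hL, hcontr⟩ := exists_contracting_embedding_of_spectralRadius_lt_one hrad
  refine ⟨m, L, h⁻¹, h⁻¹ * r, mul_lt_of_lt_one_right (inv_pos.2 hh) hr, hL, fun v => ?_⟩
  have euler : L (A v) + h⁻¹ • L v = h⁻¹ • L ((1 + (h : ℂ) • A) v) := by
    have : (1 + (h : ℂ) • A) v = v + (h : ℂ) • A v := rfl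
    rw [this, map_add, map_smul, Complex.coe_smul, smul_add, inv_smul_smul₀ hh.ne', add_comm]
  rw [euler, norm_smul, Real.norm_of_nonneg (inv_nonneg.2 hh.le), mul_assoc]
  gcongr
  exact hcontr v

theorem exists_norm_le_exp_of_spectrum_re_neg {A : E →L[ℂ] E}
    (hA : ∀ μ ∈ spectrum ℂ A, μ.re < 0) {z g : ℝ → E} {c μ : ℝ} (hμ : 0 < μ)
    (hz : ∀ t ≥ (0 : ℝ), HasDerivAt z (A (z t) + g t) t)
    (hg : ∀ t ≥ (0 : ℝ), ‖g t‖ ≤ c * Real.exp (-μ * t) * (‖z t‖ + 1)) :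
    ∃ C > 0, ∃ lam > 0, ∀ t ≥ (0 : ℝ), ‖z t‖ ≤ C * Real.exp (-lam * t) := by
  obtain ⟨m, L, a, b, hab, hL, hdiss⟩ := exists_dissipative_embedding_of_spectrum_re_neg hA
  have hc : 0 ≤ c := by
    have := (norm_nonneg _).trans (hg 0 le_rfl)
    exact nonneg_of_mul_nonneg_left (by simpa using this) (by positivity : 0 < ‖z 0‖ + 1)
  have hLz : ∀ t ≥ (0 : ℝ), HasDerivAt (fun t => L (z t)) (L (A (z t) + g t)) t := fun t ht =>
    (L.restrictScalars ℝ).hasFDerivAt.comp_hasDerivAt t (hz t ht)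
  have hLbound : ∀ t ≥ (0 : ℝ), ‖L (A (z t) + g t) + a • L (z t)‖ ≤
      b * ‖L (z t)‖ + ‖L‖ * c * Real.exp (-μ * t) * (‖L (z t)‖ + 1) := fun t ht =>
    calc ‖L (A (z t) + g t) + a • L (z t)‖
        = ‖(L (A (z t)) + a • L (z t)) + L (g t)‖ := by rw [map_add, add_right_comm]
      _ ≤ b * ‖L (z t)‖ + ‖L‖ * (c * Real.exp (-μ * t) * (‖z t‖ + 1)) :=
          norm_add_le_of_le (hdiss _) (L.le_opNorm_of_le (hg t ht))
      _ ≤ b * ‖L (z t)‖ + ‖L‖ * c * Real.exp (-μ * t) * (‖L (z t)‖ + 1) := by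
          rw [← mul_assoc, ← mul_assoc]
          gcongr
          exact hL _
  obtain ⟨C, hC, lam, hlam, hdecay⟩ :=
    exists_norm_le_exp_of_norm_deriv_add_smul_le hab (by positivity) hμ hLz hLbound
  exact ⟨C, hC, lam, hlam, fun t ht => (hL _).trans (hdecay t ht)⟩

end Operator

section Matrix

theorem hasDerivAt_ofReal_comp {ι : Type*} {x : ℝ → ι → ℝ} {x' : ι → ℝ} {t : ℝ}
    (hx : HasDerivAt x x' t) :
    HasDerivAt (fun s => Complex.ofReal ∘ x s) (Complex.ofReal ∘ x') t :=
  hasDerivAt_pi.2 fun i => (hasDerivAt_pi.1 hx i).ofReal_comp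

theorem norm_ofReal_comp {ι : Type*} [Fintype ι] (v : ι → ℝ) : ‖Complex.ofReal ∘ v‖ = ‖v‖ := by
  simp [Pi.norm_def]

theorem ofReal_comp_mulVec {m ι : Type*} [Fintype ι] (F : Matrix m ι ℝ) (v : ι → ℝ) :
    Complex.ofReal ∘ F.mulVec v = (F.map Complex.ofReal).mulVec (Complex.ofReal ∘ v) :=
  funext (RingHom.map_mulVec Complex.ofRealHom F v)

variable {m ι R : Type*} [Fintype m] [Fintype ι] [NonUnitalNormedRing R]

theorem norm_mulVec_le_card_mul (A : Matrix m ι R) (v : ι → R) :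
    ‖A.mulVec v‖ ≤ Fintype.card ι * ‖A‖ * ‖v‖ := by
  refine (pi_norm_le_iff_of_nonneg (by positivity)).2 fun i => ?_
  calc ‖∑ j, A i j * v j‖ ≤ ∑ _j : ι, ‖A‖ * ‖v‖ := norm_sum_le_of_le _ fun j _ =>
        norm_mul_le_of_le (Matrix.norm_entry_le_entrywise_sup_norm A) (norm_le_pi_norm v j)
    _ = Fintype.card ι * ‖A‖ * ‖v‖ := by simp [mul_assoc]

theorem norm_mulVec_add_le {β : ℝ} {A : Matrix m ι R} {w : m → R} (hA : ‖A‖ ≤ β) (hw : ‖w‖ ≤ β)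
    (v : ι → R) : ‖A.mulVec v + w‖ ≤ (Fintype.card ι + 1) * β * (‖v‖ + 1) := by
  have hβ : 0 ≤ β := (norm_nonneg w).trans hw
  calc ‖A.mulVec v + w‖ ≤ Fintype.card ι * β * ‖v‖ + β := by
        refine norm_add_le_of_le ((norm_mulVec_le_card_mul A v).trans ?_) hw
        gcongr
    _ ≤ Fintype.card ι * β * ‖v‖ + β + (Fintype.card ι * β + β * ‖v‖) :=
        le_add_of_nonneg_right (by positivity)
    _ = (Fintype.card ι + 1) * β * (‖v‖ + 1) := by ring

theorem hurwitz_with_vanishing_perturbation_general [DecidableEq ι] (F : Matrix ι ι ℝ)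
    (hF : ∀ μ ∈ spectrum ℂ (F.map Complex.ofReal), μ.re < 0)
    (Ftil : ℝ → Matrix ι ι ℝ) (Fhat : ℝ → ι → ℝ) (c₀ lam₀ : ℝ) (hlam₀ : 0 < lam₀)
    (hFtilBound : ∀ t ≥ (0 : ℝ), ‖Ftil t‖ ≤ c₀ * Real.exp (-lam₀ * t))
    (hFhatBound : ∀ t ≥ (0 : ℝ), ‖Fhat t‖ ≤ c₀ * Real.exp (-lam₀ * t))
    (x : ℝ → ι → ℝ)
    (hx : ∀ t ≥ (0 : ℝ),
      HasDerivAt x (F.mulVec (x t) + (Ftil t).mulVec (x t) + Fhat t) t) :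
    ∃ c > 0, ∃ lam > 0, ∀ t ≥ (0 : ℝ), ‖x t‖ ≤ c * Real.exp (-lam * t) := by
  set A : (ι → ℂ) →L[ℂ] (ι → ℂ) :=
    Module.End.toContinuousLinearMap (ι → ℂ) (Matrix.toLin' (F.map Complex.ofReal))
  have hA : ∀ μ ∈ spectrum ℂ A, μ.re < 0 := by
    rwa [AlgEquiv.spectrum_eq, Matrix.spectrum_toLin']
  have hz : ∀ t ≥ (0 : ℝ), HasDerivAt (fun t => Complex.ofReal ∘ x t)
      (A (Complex.ofReal ∘ x t) + Complex.ofReal ∘ ((Ftil t).mulVec (x t) + Fhat t)) t :=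
    fun t ht => (hasDerivAt_ofReal_comp (hx t ht)).congr_deriv <| by
      change _ = (F.map Complex.ofReal).mulVec _ + _
      rw [← ofReal_comp_mulVec, add_assoc]
      ext i
      simp
  simp only [← norm_ofReal_comp (x _)]
  refine exists_norm_le_exp_of_spectrum_re_neg (c := (Fintype.card ι + 1) * c₀) hA hlam₀ hz
    fun t ht => ?_
  rw [norm_ofReal_comp, norm_ofReal_comp, mul_assoc _ c₀]
  exact norm_mulVec_add_le (hFtilBound t ht) (hFhatBound t ht) (x t)

end Matrix

/-- A Hurwitz linear system perturbed by exponentially vanishing terms remains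
exponentially stable (key lemma in the proof of Theorem 1). -/
theorem hurwitz_with_vanishing_perturbation
    (n : ℕ) (hn : 1 ≤ n)
    (F : Matrix (Fin n) (Fin n) ℝ)
    (hF : ∀ μ ∈ spectrum ℂ (F.map (Complex.ofReal)), μ.re < 0)
    (Ftil : ℝ → Matrix (Fin n) (Fin n) ℝ) (Fhat : ℝ → Fin n → ℝ)
    (hFtilCont : Continuous Ftil) (hFhatCont : Continuous Fhat)
    (c₀ lam₀ : ℝ) (hc₀ : 0 < c₀) (hlam₀ : 0 < lam₀)
    (hFtilBound : ∀ t ≥ (0 : ℝ), ‖Ftil t‖ ≤ c₀ * Real.exp (-lam₀ * t))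
    (hFhatBound : ∀ t ≥ (0 : ℝ), ‖Fhat t‖ ≤ c₀ * Real.exp (-lam₀ * t))
    (x : ℝ → Fin n → ℝ)
    (hx : ∀ t ≥ (0 : ℝ),
      HasDerivAt x (F.mulVec (x t) + (Ftil t).mulVec (x t) + Fhat t) t) :
    ∃ c > 0, ∃ lam > 0, ∀ t ≥ (0 : ℝ), ‖x t‖ ≤ c * Real.exp (-lam * t) :=
  hurwitz_with_vanishing_perturbation_general F hF Ftil Fhat c₀ lam₀ hlam₀ hFtilBound
    hFhatBound x hx
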